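/- Let b be a prime and r ∈ ℕ with r ≥ 2. If k, l ∈ ℕ₀ satisfy κ(k ⊖ l) > r, then b̂_{r,per}(k, l) = 0. -/

import Mathlib

/-!
Since `B_r(1 + t) - B_r(t) = r t ^ (r - 1)`, on the unit square the periodized Bernoulli polynomial
of `x - y` equals `B_r(x - y)` plus a multiple of the truncated power `(y - x)_+ ^ (r - 1)`
(`bernoulliPoly_fract`). Both parts have vanishing Walsh coefficient when the digits of `k` and `l`
differ in more than `r` places.

* Polynomials. Writing `x = (ξ + x') / b` gives `wal_k(x) = ω_b ^ (κ_0 ξ) wal_{k'}(x')` with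
  `k' = ⌊k / b⌋`. If `κ_0 ≠ 0`, summation over `ξ` kills the leading term of a polynomial, so by
  induction `wal_k` is orthogonal to polynomials of degree below the number of nonzero digits of `k`
  (`integral_pow_mul_walsh`). As `κ(k) + κ(l) ≥ κ(k ⊖ l)`, powers of `y - x` of degree below
  `κ(k ⊖ l)` have zero coefficient (`integral_square_pow_mul_walsh`).

* Truncated powers. The square is cut into `b × b` cells by the leading digits `ξ, η` of `x, y`.
  Off the diagonal the kernel `(y - x)_+ ^ m` is zero or polynomial, and the previous part applies
  to `k', l'`, whose digits differ in at most one place fewer. On a diagonal cell the kernel is a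
  rescaled copy of itself independent of `ξ`; the diagonal cells cancel if `κ_0 ≠ λ_0` (the lowest
  digits of `k` and `l`), and otherwise vanish by induction. This gives a zero coefficient as soon
  as the digits differ in more than `m + 1` places (`integral_truncPow_mul_walsh`); here
  `m = r - 1`.
-/

open scoped BigOperators

/-- The `i`-th digit (starting from `i = 0`) of the `b`-adic expansion of `k`. -/
def bdigit (b k i : ℕ) : ℕ := k / b ^ i % b

/-- The set of indices of nonzero `b`-adic digits of `k`. -/
def bsupp (b k : ℕ) : Finset ℕ := (Finset.range (k + 1)).filter fun i => bdigit b k i ≠ 0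

/-- The Hamming metric `κ(k)`: the number of nonzero `b`-adic digits of `k`. -/
def hamming (b k : ℕ) : ℕ := (bsupp b k).card

/-- The Dick metric `μ_α(k)`: the sum of the `min(v, α)` largest exponents-plus-one
`a_1 > a_2 > ⋯` of the nonzero `b`-adic digits of `k`. -/
def dick (b α k : ℕ) : ℕ := ((((bsupp b k).sort (· ≤ ·)).reverse.take α).map (· + 1)).sum

/-- Digitwise addition `k ⊕ l` modulo `b` of the `b`-adic digits. -/
def dadd (b k l : ℕ) : ℕ :=
  ∑ i ∈ Finset.range (k + l + 1), (bdigit b k i + bdigit b l i) % b * b ^ i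

/-- Digitwise subtraction `k ⊖ l` modulo `b` of the `b`-adic digits. -/
def dsub (b k l : ℕ) : ℕ :=
  ∑ i ∈ Finset.range (k + l + 1), (bdigit b k i + (b - bdigit b l i)) % b * b ^ i

/-- Hamming metric of a vector: sum over coordinates. -/
def hammingVec (b : ℕ) {s : ℕ} (k : Fin s → ℕ) : ℕ := ∑ j, hamming b (k j)

/-- Dick metric of a vector: sum over coordinates. -/
def dickVec (b α : ℕ) {s : ℕ} (k : Fin s → ℕ) : ℕ := ∑ j, dick b α (k j)

open MeasureTheory

/-- The `i`-th (for `i ≥ 1`) `b`-adic digit `ξ_i` of a real number `x ∈ [0,1)`, using the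
expansion in which infinitely many digits differ from `b - 1`. -/
noncomputable def rdigit (b : ℕ) (x : ℝ) (i : ℕ) : ℤ := ⌊x * (b : ℝ) ^ i⌋ % b

/-- The `k`-th `b`-adic Walsh function, `wal_k(x) = ω_b^{κ_0 ξ_1 + κ_1 ξ_2 + ⋯}` where
`ω_b = exp(2π√-1/b)`, `κ` are the `b`-adic digits of `k` and `ξ` those of `x`. -/
noncomputable def walsh (b k : ℕ) (x : ℝ) : ℂ :=
  Complex.exp (2 * (Real.pi : ℂ) * Complex.I / (b : ℂ) *
    ∑ a ∈ Finset.range (k + 1), (bdigit b k a : ℂ) * (rdigit b x (a + 1) : ℂ))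

/-- The `k`-th `b`-adic Walsh function on `[0,1)^s`, `wal_k(x) = ∏_j wal_{k_j}(x_j)`. -/
noncomputable def walshVec (b : ℕ) {s : ℕ} (k : Fin s → ℕ) (x : Fin s → ℝ) : ℂ :=
  ∏ j, walsh b (k j) (x j)

/-- The Bernoulli polynomial `B_r` evaluated at a real number. -/
noncomputable def bernoulliPoly (r : ℕ) (x : ℝ) : ℝ := Polynomial.aeval x (Polynomial.bernoulli r)

/-- The reproducing kernel `K_α` of the Sobolev space `H_α`:
`K_α(x,y) = ∑_{r=0}^{α} B_r(x)B_r(y)/(r!)² + (-1)^{α+1} B_{2α}(|x-y|)/(2α)!`. -/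
noncomputable def Kker (α : ℕ) (x y : ℝ) : ℝ :=
  ∑ r ∈ Finset.range (α + 1), bernoulliPoly r x * bernoulliPoly r y / ((r.factorial : ℝ)) ^ 2
    + (-1 : ℝ) ^ (α + 1) * bernoulliPoly (2 * α) |x - y| / ((2 * α).factorial : ℝ)

/-- The `(k,l)`-th Walsh coefficient of the kernel `K_α`. -/
noncomputable def Khat (b α : ℕ) (k l : ℕ) : ℂ :=
  ∫ x in Set.Ico (0 : ℝ) 1, ∫ y in Set.Ico (0 : ℝ) 1,
    (Kker α x y : ℂ) * (starRingEnd ℂ) (walsh b k x) * walsh b l y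

/-- The `(k,l)`-th Walsh coefficient of the `s`-variate kernel
`K_{α,s}(x,y) = ∏_j K_α(x_j, y_j)`. -/
noncomputable def KhatS (b α s : ℕ) (k l : Fin s → ℕ) : ℂ :=
  ∫ x in Set.univ.pi fun _ : Fin s => Set.Ico (0 : ℝ) 1,
    ∫ y in Set.univ.pi fun _ : Fin s => Set.Ico (0 : ℝ) 1,
      ((∏ j, Kker α (x j) (y j) : ℝ) : ℂ) * (starRingEnd ℂ) (walshVec b k x) * walshVec b l y

/-- The `k`-th Walsh coefficient `b̂_r(k)` of the normalized Bernoulli polynomial `B_r/r!`. -/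
noncomputable def bhat (b r k : ℕ) : ℂ :=
  ∫ x in Set.Ico (0 : ℝ) 1,
    ((bernoulliPoly r x / (r.factorial : ℝ) : ℝ) : ℂ) * (starRingEnd ℂ) (walsh b k x)

/-- The `(k,l)`-th Walsh coefficient `b̂_{r,per}(k,l)` of `(x,y) ↦ B̃_r(x-y)/r!`, where
`B̃_r` is the 1-periodic extension of the Bernoulli polynomial `B_r` from `[0,1)` to `ℝ`. -/
noncomputable def bhatPer (b r : ℕ) (k l : ℕ) : ℂ :=
  ∫ x in Set.Ico (0 : ℝ) 1, ∫ y in Set.Ico (0 : ℝ) 1,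
    ((bernoulliPoly r (Int.fract (x - y)) / (r.factorial : ℝ) : ℝ) : ℂ) *
      (starRingEnd ℂ) (walsh b k x) * walsh b l y


/-! ### Digits -/

/-- The number of positions below `n` at which the `b`-adic digits of `k` and `l` differ;
`digitDiff b n k 0` counts the nonzero digits of `k` below position `n`. -/
def digitDiff (b n k l : ℕ) : ℕ :=
  ((Finset.range n).filter fun i => bdigit b k i ≠ bdigit b l i).card

lemma bdigit_succ (b k i : ℕ) : bdigit b k (i + 1) = bdigit b (k / b) i := by
  simp [bdigit, Nat.div_div_eq_div_mul, pow_succ']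

lemma bdigit_zero_right (b k : ℕ) : bdigit b k 0 = k % b := by simp [bdigit]

lemma bdigit_zero_left (b i : ℕ) : bdigit b 0 i = 0 := by simp [bdigit]

lemma digitDiff_succ (b n k l : ℕ) :
    digitDiff b (n + 1) k l
      = digitDiff b n (k / b) (l / b) + if k % b ≠ l % b then 1 else 0 := by
  unfold digitDiff
  rw [Finset.card_filter, Finset.card_filter, Finset.sum_range_succ']
  simp only [bdigit_succ, bdigit_zero_right]

lemma digitDiff_le_add (b n k l : ℕ) :
    digitDiff b n k l ≤ digitDiff b n k 0 + digitDiff b n l 0 := by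
  unfold digitDiff
  refine le_trans (Finset.card_le_card ?_) (Finset.card_union_le _ _)
  intro i
  simp only [Finset.mem_filter, Finset.mem_union, bdigit_zero_left]
  rintro ⟨hi, hne⟩
  by_cases h : bdigit b k i = 0
  · exact Or.inr ⟨hi, fun h' => hne (h.trans h'.symm)⟩
  · exact Or.inl ⟨hi, h⟩

lemma bdigit_sum {b : ℕ} (hb : 0 < b) (j : ℕ) :
    ∀ (n : ℕ) (c : ℕ → ℕ), (∀ i, c i < b) →
      bdigit b (∑ i ∈ Finset.range n, c i * b ^ i) j = if j < n then c j else 0 := by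
  have key : ∀ (n : ℕ) (c : ℕ → ℕ), ∑ i ∈ Finset.range (n + 1), c i * b ^ i
      = c 0 + b * ∑ i ∈ Finset.range n, c (i + 1) * b ^ i := by
    intro n c
    rw [Finset.sum_range_succ', Finset.mul_sum, add_comm]
    congr 1
    · simp
    · exact Finset.sum_congr rfl fun i _ => by ring
  induction j with
  | zero =>
    intro n c hc
    cases n with
    | zero => simp [bdigit_zero_left]
    | succ n => rw [key, bdigit_zero_right]; simp [Nat.mod_eq_of_lt (hc 0)]
  | succ j ih =>
    intro n c hc
    cases n with
    | zero => simp [bdigit_zero_left]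
    | succ n =>
      rw [key, bdigit_succ, Nat.add_mul_div_left _ _ hb, Nat.div_eq_of_lt (hc 0), zero_add,
        ih n (fun i => c (i + 1)) (fun i => hc _)]
      simp

lemma hamming_dsub_le {b : ℕ} (hb : 0 < b) (k l : ℕ) :
    hamming b (dsub b k l) ≤ digitDiff b (k + l + 1) k l := by
  unfold hamming digitDiff bsupp
  refine Finset.card_le_card ?_
  intro i
  simp only [Finset.mem_filter, Finset.mem_range]
  rintro ⟨-, hne⟩
  unfold dsub at hne
  rw [bdigit_sum hb i _ (fun i => (bdigit b k i + (b - bdigit b l i)) % b)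
    (fun i => Nat.mod_lt _ hb)] at hne
  split_ifs at hne with hi
  · refine ⟨hi, fun heq => hne ?_⟩
    have : bdigit b l i < b := Nat.mod_lt _ hb
    simp only [heq, Nat.add_sub_cancel' this.le, Nat.mod_self]
  · exact absurd rfl hne

/-! ### Walsh functions -/

/-- The primitive root of unity `ω_b = exp(2πi/b)`. -/
noncomputable def walshRoot (b : ℕ) : ℂ := Complex.exp (2 * Real.pi * Complex.I / b)

lemma conj_walshRoot (b : ℕ) : (starRingEnd ℂ) (walshRoot b) = (walshRoot b)⁻¹ := by
  unfold walshRoot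
  rw [← Complex.exp_conj, ← Complex.exp_neg]
  congr 1
  simp [Complex.conj_ofNat, neg_div]

lemma walshRoot_ne_zero (b : ℕ) : walshRoot b ≠ 0 := Complex.exp_ne_zero _

lemma sum_walshRoot_zpow {b : ℕ} (hb : 0 < b) {d : ℤ} (hd : ¬ (b : ℤ) ∣ d) :
    ∑ ξ ∈ Finset.range b, (walshRoot b ^ d) ^ ξ = 0 := by
  have hp : IsPrimitiveRoot (walshRoot b) b := Complex.isPrimitiveRoot_exp b hb.ne'
  have h1 : walshRoot b ^ d ≠ 1 := fun h => hd ((hp.zpow_eq_one_iff_dvd d).1 h)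
  rw [geom_sum_eq h1]
  have : (walshRoot b ^ d) ^ b = 1 := by
    rw [← zpow_natCast, ← zpow_mul, mul_comm, zpow_mul, zpow_natCast, hp.pow_eq_one, one_zpow]
  rw [this]; simp

lemma measurable_walsh (b k : ℕ) : Measurable (walsh b k) := by
  unfold walsh rdigit
  have h : ∀ i : ℕ, Measurable fun x : ℝ => ((⌊x * (b : ℝ) ^ i⌋ % (b : ℤ) : ℤ) : ℂ) := fun i =>
    (measurable_from_top (f := fun z : ℤ => ((z % (b : ℤ) : ℤ) : ℂ))).comp
      (Int.measurable_floor.comp (measurable_id.mul_const _))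
  refine Complex.measurable_exp.comp (Measurable.const_mul ?_ _)
  exact Finset.measurable_sum _ fun a _ => (h (a + 1)).const_mul _

lemma norm_walsh (b k : ℕ) (x : ℝ) : ‖walsh b k x‖ = 1 := by
  unfold walsh
  have : (2 * (Real.pi : ℂ) * Complex.I / (b : ℂ) *
      ∑ a ∈ Finset.range (k + 1), (bdigit b k a : ℂ) * (rdigit b x (a + 1) : ℂ))
      = ((2 * Real.pi / b * ∑ a ∈ Finset.range (k + 1),
        (bdigit b k a : ℝ) * (rdigit b x (a + 1) : ℝ) : ℝ) : ℂ) * Complex.I := by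
    push_cast; ring
  rw [this, Complex.norm_exp_ofReal_mul_I]

lemma bdigit_eq_zero {b k i : ℕ} (hb : 2 ≤ b) (h : k ≤ i) : bdigit b k i = 0 := by
  unfold bdigit
  rw [Nat.div_eq_of_lt, Nat.zero_mod]
  exact lt_of_le_of_lt h (Nat.lt_pow_self (by omega))

/-- Self-similarity of Walsh functions: prepending the digit `ξ` to `x` multiplies by a power of
`ω_b` and drops the lowest digit of `k`. -/
lemma walsh_div {b : ℕ} (hb : 2 ≤ b) (k : ℕ) {ξ : ℕ} (hξ : ξ < b) {x : ℝ}
    (hx : x ∈ Set.Ico (0 : ℝ) 1) :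
    walsh b k ((ξ + x) / b) = (walshRoot b ^ (k % b)) ^ ξ * walsh b (k / b) x := by
  have hb0 : (b : ℝ) ≠ 0 := by positivity
  have hd0 : rdigit b ((ξ + x) / b) 1 = ξ := by
    unfold rdigit
    rw [pow_one, div_mul_cancel₀ _ hb0, Int.floor_natCast_add,
      Int.floor_eq_zero_iff.2 hx, add_zero]
    exact Int.emod_eq_of_lt (by positivity) (by exact_mod_cast hξ)
  have hds : ∀ a : ℕ, rdigit b ((ξ + x) / b) (a + 1 + 1) = rdigit b x (a + 1) := by
    intro a
    unfold rdigit
    have : (ξ + x) / b * (b : ℝ) ^ (a + 1 + 1)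
        = ((ξ * b ^ a * b : ℕ) : ℝ) + x * (b : ℝ) ^ (a + 1) := by
      field_simp
      push_cast
      ring
    rw [this, Int.floor_natCast_add]
    push_cast
    rw [add_comm, Int.add_mul_emod_self_right]
  have hsum : ∑ a ∈ Finset.range (k + 1),
        (bdigit b k a : ℂ) * (rdigit b ((ξ + x) / b) (a + 1) : ℂ)
      = (∑ a ∈ Finset.range (k / b + 1),
        (bdigit b (k / b) a : ℂ) * (rdigit b x (a + 1) : ℂ)) + ((k % b : ℕ) : ℂ) * ξ := by
    have hext : ∑ a ∈ Finset.range (k + 1),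
        (bdigit b k a : ℂ) * (rdigit b ((ξ + x) / b) (a + 1) : ℂ) =
        ∑ a ∈ Finset.range (k + 1 + 1),
        (bdigit b k a : ℂ) * (rdigit b ((ξ + x) / b) (a + 1) : ℂ) := by
      rw [Finset.sum_range_succ _ (k + 1), bdigit_eq_zero hb (Nat.le_succ k)]
      simp
    rw [hext, Finset.sum_range_succ']
    simp only [bdigit_succ, hds, zero_add, hd0, bdigit_zero_right, Int.cast_natCast]
    congr 1
    symm
    refine Finset.sum_subset ?_ ?_
    · intro a
      have := Nat.div_le_self k b
      simp only [Finset.mem_range]; omega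
    · intro a _ ha
      rw [bdigit_eq_zero hb (by simp only [Finset.mem_range] at ha; omega)]
      simp
  unfold walsh walshRoot
  rw [hsum, mul_add, Complex.exp_add, mul_comm]
  congr 1
  rw [← pow_mul, ← Complex.exp_nat_mul]
  congr 1
  push_cast; ring

/-! ### Self-similarity of integrals over the unit interval -/

lemma integrableOn_unit {f : ℝ → ℂ} (hf : Measurable f) {C : ℝ}
    (hC : ∀ x ∈ Set.Ico (0 : ℝ) 1, ‖f x‖ ≤ C) : IntegrableOn f (Set.Ico (0 : ℝ) 1) :=
  Measure.integrableOn_of_bounded (by simp) hf.aestronglyMeasurable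
    ((ae_restrict_iff' measurableSet_Ico).2 (Filter.Eventually.of_forall hC))

lemma integral_unit_split {b : ℕ} (hb : 0 < b) {f : ℝ → ℂ}
    (hf : IntegrableOn f (Set.Ico (0 : ℝ) 1)) :
    ∫ x in Set.Ico (0 : ℝ) 1, f x
      = (b : ℂ)⁻¹ * ∑ ξ ∈ Finset.range b, ∫ x in Set.Ico (0 : ℝ) 1, f ((ξ + x) / b) := by
  have hb0 : (0 : ℝ) < b := by exact_mod_cast hb
  have conv : ∀ g : ℝ → ℂ, ∫ x in Set.Ico (0 : ℝ) 1, g x = ∫ x in (0 : ℝ)..1, g x := by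
    intro g
    rw [intervalIntegral.integral_of_le zero_le_one, integral_Ico_eq_integral_Ioc]
  have hI : IntervalIntegrable f volume 0 1 := by
    rw [intervalIntegrable_iff_integrableOn_Ico_of_le zero_le_one]; exact hf
  simp only [conv]
  have hs := intervalIntegral.sum_integral_adjacent_intervals (f := f) (μ := volume)
    (a := fun i : ℕ => (i : ℝ) / b) (n := b) (by
      intro i hi
      refine hI.mono_set ?_
      have hi' : (i : ℝ) + 1 ≤ b := by exact_mod_cast hi
      rw [Set.uIcc_of_le zero_le_one, Set.uIcc_of_le (by push_cast; gcongr; linarith)]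
      refine Set.Icc_subset_Icc (by positivity) ?_
      push_cast
      rw [div_le_one hb0]; exact hi')
  simp only [Nat.cast_zero, zero_div, div_self hb0.ne'] at hs
  rw [← hs, Finset.mul_sum]
  refine Finset.sum_congr rfl fun i _ => ?_
  have := intervalIntegral.integral_comp_add_div (a := 0) (b := 1) f hb0.ne' ((i : ℝ) / b)
  simp only [← add_div, add_zero] at this
  rw [this, Complex.real_smul]
  push_cast
  rw [inv_mul_cancel_left₀ (by exact_mod_cast hb0.ne')]

lemma unit_div_mem {b : ℕ} {ξ : ℕ} (hξ : ξ < b) {x : ℝ} (hx : x ∈ Set.Ico (0 : ℝ) 1) :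
    ((ξ : ℝ) + x) / b ∈ Set.Ico (0 : ℝ) 1 := by
  have hb0 : (0 : ℝ) < b := by exact_mod_cast (Nat.zero_le ξ).trans_lt hξ
  have hξ' : (ξ : ℝ) + 1 ≤ b := by exact_mod_cast hξ
  obtain ⟨h0, h1⟩ := hx
  refine ⟨by positivity, ?_⟩
  rw [div_lt_one hb0]; linarith

lemma integrableOn_inner {F : ℝ → ℝ → ℂ} (hF : Measurable (Function.uncurry F)) {C : ℝ}
    (hC : ∀ x ∈ Set.Ico (0 : ℝ) 1, ∀ y ∈ Set.Ico (0 : ℝ) 1, ‖F x y‖ ≤ C) :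
    IntegrableOn (fun x => ∫ y in Set.Ico (0 : ℝ) 1, F x y) (Set.Ico (0 : ℝ) 1) := by
  refine integrableOn_unit (C := C) hF.stronglyMeasurable.integral_prod_right.measurable ?_
  intro x hx
  have := norm_setIntegral_le_of_norm_le_const (μ := volume) (s := Set.Ico (0 : ℝ) 1)
    (f := F x) (C := C) (by simp) (hC x hx)
  simpa using this

lemma integral_square_split {b : ℕ} (hb : 0 < b) {F : ℝ → ℝ → ℂ}
    (hF : Measurable (Function.uncurry F)) {C : ℝ}
    (hC : ∀ x ∈ Set.Ico (0 : ℝ) 1, ∀ y ∈ Set.Ico (0 : ℝ) 1, ‖F x y‖ ≤ C) :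
    ∫ x in Set.Ico (0 : ℝ) 1, ∫ y in Set.Ico (0 : ℝ) 1, F x y
      = (b : ℂ)⁻¹ * ∑ ξ ∈ Finset.range b, ((b : ℂ)⁻¹ * ∑ η ∈ Finset.range b,
        ∫ x in Set.Ico (0 : ℝ) 1, ∫ y in Set.Ico (0 : ℝ) 1, F ((ξ + x) / b) ((η + y) / b)) := by
  rw [integral_unit_split hb (integrableOn_inner hF hC)]
  congr 1
  refine Finset.sum_congr rfl fun ξ hξ => ?_
  rw [Finset.mem_range] at hξ
  rw [← integral_finsetSum, ← integral_const_mul]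
  · refine setIntegral_congr_fun measurableSet_Ico fun x hx => ?_
    exact integral_unit_split hb (integrableOn_unit (hF.comp measurable_prodMk_left)
      (hC _ (unit_div_mem hξ hx)))
  · intro η hη
    rw [Finset.mem_range] at hη
    refine integrableOn_inner (F := fun x y => F ((ξ + x) / b) ((η + y) / b)) (C := C) ?_ ?_
    · exact hF.comp (f := fun p : ℝ × ℝ => (((ξ : ℝ) + p.1) / b, ((η : ℝ) + p.2) / b))
        (by fun_prop)
    · exact fun x hx y hy => hC _ (unit_div_mem hξ hx) _ (unit_div_mem hη hy)

/-- Integration over the square is linear on finite combinations of bounded measurable kernels;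
this is stated for a combination whose terms all have vanishing integral. -/
lemma integral_square_eq_zero {ι : Type*} (s : Finset ι) {G : ι → ℝ → ℝ → ℂ} {K : ℝ → ℝ → ℂ}
    (hGm : ∀ i, Measurable (Function.uncurry (G i)))
    (hGb : ∀ i, ∀ x ∈ Set.Ico (0 : ℝ) 1, ∀ y ∈ Set.Ico (0 : ℝ) 1, ‖G i x y‖ ≤ 1)
    (hGz : ∀ i ∈ s, ∫ x in Set.Ico (0 : ℝ) 1, ∫ y in Set.Ico (0 : ℝ) 1, G i x y = 0)
    (a : ι → ℂ) (hK : ∀ x ∈ Set.Ico (0 : ℝ) 1, ∀ y ∈ Set.Ico (0 : ℝ) 1,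
      K x y = ∑ i ∈ s, a i * G i x y) :
    ∫ x in Set.Ico (0 : ℝ) 1, ∫ y in Set.Ico (0 : ℝ) 1, K x y = 0 := by
  have hin : ∀ x ∈ Set.Ico (0 : ℝ) 1, ∫ y in Set.Ico (0 : ℝ) 1, K x y
      = ∑ i ∈ s, a i * ∫ y in Set.Ico (0 : ℝ) 1, G i x y := by
    intro x hx
    have hGi : ∀ i, IntegrableOn (G i x) (Set.Ico (0 : ℝ) 1) := fun i =>
      integrableOn_unit ((hGm i).comp measurable_prodMk_left) (hGb i x hx)
    rw [setIntegral_congr_fun measurableSet_Ico (hK x hx),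
      integral_finsetSum _ fun i _ => (hGi i).const_mul _]
    simp only [integral_const_mul]
  rw [setIntegral_congr_fun measurableSet_Ico hin, integral_finsetSum _ fun i _ =>
    (integrableOn_inner (hGm i) (hGb i)).const_mul _]
  refine Finset.sum_eq_zero fun i hi => ?_
  rw [integral_const_mul, hGz i hi, mul_zero]

/-! ### Polynomials against Walsh functions -/

lemma norm_le_one_of_unit {x : ℝ} (hx : x ∈ Set.Ico (0 : ℝ) 1) : ‖(x : ℂ)‖ ≤ 1 := by
  rw [Complex.norm_real, Real.norm_eq_abs, abs_of_nonneg hx.1]; exact hx.2.le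

lemma integrableOn_pow_mul_walsh (b k j : ℕ) :
    IntegrableOn (fun x : ℝ => (x : ℂ) ^ j * walsh b k x) (Set.Ico (0 : ℝ) 1) := by
  refine integrableOn_unit (C := 1)
    ((Complex.measurable_ofReal.pow_const j).mul (measurable_walsh b k)) fun x hx => ?_
  rw [norm_mul, norm_walsh, mul_one, norm_pow]
  exact pow_le_one₀ (norm_nonneg _) (norm_le_one_of_unit hx)

/-- Each nonzero digit of `k` lowers the degree of a polynomial by one: summing over the leading
digit `ξ` of `x` against a nontrivial character kills the top-degree term of `((ξ + x) / b) ^ j`. -/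
lemma integral_pow_mul_walsh {b : ℕ} (hb : 2 ≤ b) (n : ℕ) :
    ∀ k j : ℕ, j < digitDiff b n k 0 →
      ∫ x in Set.Ico (0 : ℝ) 1, (x : ℂ) ^ j * walsh b k x = 0 := by
  have hb0 : 0 < b := by omega
  induction n with
  | zero => intro k j h; simp [digitDiff] at h
  | succ n ih =>
    intro k j h
    rw [digitDiff_succ, Nat.zero_div, Nat.zero_mod] at h
    rw [integral_unit_split hb0 (integrableOn_pow_mul_walsh b k j)]
    have hterm : ∀ ξ ∈ Finset.range b,
        ∫ x in Set.Ico (0 : ℝ) 1, ((((ξ + x) / b : ℝ)) : ℂ) ^ j * walsh b k ((ξ + x) / b)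
        = (walshRoot b ^ (k % b)) ^ ξ * ((b : ℂ)⁻¹ ^ j *
          ∫ x in Set.Ico (0 : ℝ) 1, (x : ℂ) ^ j * walsh b (k / b) x) := by
      intro ξ hξ
      rw [Finset.mem_range] at hξ
      have hpt : ∀ x ∈ Set.Ico (0 : ℝ) 1,
          ((((ξ + x) / b : ℝ)) : ℂ) ^ j * walsh b k ((ξ + x) / b)
          = ∑ i ∈ Finset.range (j + 1), ((walshRoot b ^ (k % b)) ^ ξ * (b : ℂ)⁻¹ ^ j *
            ((ξ : ℂ) ^ (j - i) * (j.choose i))) * ((x : ℂ) ^ i * walsh b (k / b) x) := by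
        intro x hx
        rw [walsh_div hb k hξ hx]
        push_cast
        rw [div_eq_mul_inv, mul_pow, add_comm, add_pow, Finset.sum_mul, Finset.sum_mul]
        exact Finset.sum_congr rfl fun i _ => by ring
      rw [setIntegral_congr_fun measurableSet_Ico hpt, integral_finsetSum _ fun i _ =>
        (integrableOn_pow_mul_walsh b (k / b) i).const_mul _]
      simp only [integral_const_mul]
      rw [Finset.sum_range_succ, Finset.sum_eq_zero]
      · simp; ring
      · intro i hi
        rw [Finset.mem_range] at hi
        rw [ih (k / b) i (by split_ifs at h <;> omega), mul_zero]
    rw [Finset.sum_congr rfl hterm, ← Finset.sum_mul]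
    by_cases hk : k % b = 0
    · rw [ih (k / b) j (by simpa [hk] using h)]; simp
    · have : ∑ ξ ∈ Finset.range b, (walshRoot b ^ (k % b)) ^ ξ = 0 := by
        have := sum_walshRoot_zpow hb0 (d := ((k % b : ℕ) : ℤ)) (by
          rw [Int.natCast_dvd_natCast]
          exact fun hd => hk (Nat.eq_zero_of_dvd_of_lt hd (Nat.mod_lt _ hb0)))
        simpa only [zpow_natCast] using this
      rw [this]; simp

lemma integral_sub_pow_mul_conj_walsh {b : ℕ} (hb : 2 ≤ b) {n k j : ℕ}
    (h : j < digitDiff b n k 0) (c : ℂ) :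
    ∫ x in Set.Ico (0 : ℝ) 1, (c - x) ^ j * (starRingEnd ℂ) (walsh b k x) = 0 := by
  have hconj : ∀ i, ∀ x : ℝ, (starRingEnd ℂ) ((x : ℂ) ^ i * walsh b k x)
      = (x : ℂ) ^ i * (starRingEnd ℂ) (walsh b k x) := by
    intro i x; simp
  have hpt : ∀ x : ℝ, (c - x) ^ j * (starRingEnd ℂ) (walsh b k x)
      = ∑ i ∈ Finset.range (j + 1), ((-1) ^ i * c ^ (j - i) * (j.choose i)) *
        (starRingEnd ℂ) ((x : ℂ) ^ i * walsh b k x) := by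
    intro x
    rw [sub_eq_neg_add, add_pow, Finset.sum_mul]
    refine Finset.sum_congr rfl fun i _ => ?_
    rw [hconj, neg_pow]; ring
  simp only [hpt]
  rw [integral_finsetSum]
  · refine Finset.sum_eq_zero fun i hi => ?_
    rw [Finset.mem_range] at hi
    rw [integral_const_mul, integral_conj, integral_pow_mul_walsh hb n k i (by omega)]
    simp
  · intro i _
    have h1 : IntegrableOn (fun x : ℝ => (starRingEnd ℂ) ((x : ℂ) ^ i * walsh b k x))
        (Set.Ico (0 : ℝ) 1) := by
      refine integrableOn_unit (C := 1) (Complex.continuous_conj.measurable.comp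
        ((Complex.measurable_ofReal.pow_const i).mul (measurable_walsh b k))) fun x hx => ?_
      rw [RCLike.norm_conj, norm_mul, norm_walsh, mul_one, norm_pow]
      exact pow_le_one₀ (norm_nonneg _) (norm_le_one_of_unit hx)
    exact h1.const_mul _

/-- A polynomial in `y - x` of degree `m` is a combination of products of polynomials in `x` and
in `y` whose degrees add up to `m`, so one of the two factors integrates to zero. -/
lemma integral_square_pow_mul_walsh {b : ℕ} (hb : 2 ≤ b) {n k l m : ℕ}
    (h : m < digitDiff b n k l) (c : ℂ) :
    ∫ x in Set.Ico (0 : ℝ) 1, ∫ y in Set.Ico (0 : ℝ) 1,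
      (c + (y - x)) ^ m * (starRingEnd ℂ) (walsh b k x) * walsh b l y = 0 := by
  have hin : ∀ x : ℝ, ∫ y in Set.Ico (0 : ℝ) 1,
      (c + (y - x)) ^ m * (starRingEnd ℂ) (walsh b k x) * walsh b l y
      = ∑ j ∈ Finset.range (m + 1), ((c - x) ^ j * (starRingEnd ℂ) (walsh b k x)) *
        (m.choose j * ∫ y in Set.Ico (0 : ℝ) 1, (y : ℂ) ^ (m - j) * walsh b l y) := by
    intro x
    have hpt : ∀ y : ℝ, (c + (y - x)) ^ m * (starRingEnd ℂ) (walsh b k x) * walsh b l y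
        = ∑ j ∈ Finset.range (m + 1), ((c - x) ^ j * (starRingEnd ℂ) (walsh b k x) *
          m.choose j) * ((y : ℂ) ^ (m - j) * walsh b l y) := by
      intro y
      rw [show c + ((y : ℂ) - x) = (c - x) + y by ring, add_pow, Finset.sum_mul, Finset.sum_mul]
      exact Finset.sum_congr rfl fun i _ => by ring
    simp only [hpt]
    rw [integral_finsetSum _ fun i _ => (integrableOn_pow_mul_walsh b l (m - i)).const_mul _]
    refine Finset.sum_congr rfl fun i _ => ?_
    rw [integral_const_mul]; ring
  simp only [hin]
  rw [integral_finsetSum]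
  · refine Finset.sum_eq_zero fun j hj => ?_
    rw [Finset.mem_range] at hj
    rw [integral_mul_const]
    have htri := digitDiff_le_add b n k l
    rcases lt_or_ge (m - j) (digitDiff b n l 0) with hl | hl
    · rw [integral_pow_mul_walsh hb n l (m - j) hl]; simp
    · rw [integral_sub_pow_mul_conj_walsh hb (n := n) (by omega)]; simp
  · intro j _
    refine Integrable.mul_const ?_ _
    refine integrableOn_unit (C := (‖c‖ + 1) ^ j) (Measurable.mul (by fun_prop)
      (Complex.continuous_conj.measurable.comp (measurable_walsh b k))) fun x hx => ?_
    rw [norm_mul, RCLike.norm_conj, norm_walsh, mul_one, norm_pow]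
    gcongr
    exact (norm_sub_le _ _).trans (by gcongr; exact norm_le_one_of_unit hx)

/-! ### The truncated power kernel -/

/-- The kernel `(y - x)_+ ^ m`, which carries the jump of the periodized Bernoulli polynomial
across the diagonal; for `m = 0` it is the indicator of `x < y`. -/
noncomputable def truncPow (m : ℕ) (x y : ℝ) : ℂ := if x < y then ((y : ℂ) - x) ^ m else 0

lemma measurable_truncPow_mul (b m k l : ℕ) : Measurable (Function.uncurry fun x y : ℝ =>
    truncPow m x y * (starRingEnd ℂ) (walsh b k x) * walsh b l y) := by
  have h1 : Measurable fun p : ℝ × ℝ => truncPow m p.1 p.2 := by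
    unfold truncPow
    exact Measurable.ite (measurableSet_lt measurable_fst measurable_snd)
      (by fun_prop) measurable_const
  exact (h1.mul (Complex.continuous_conj.measurable.comp
    ((measurable_walsh b k).comp measurable_fst))).mul
    ((measurable_walsh b l).comp measurable_snd)

lemma norm_truncPow_mul_le (b m k l : ℕ) : ∀ x ∈ Set.Ico (0 : ℝ) 1, ∀ y ∈ Set.Ico (0 : ℝ) 1,
    ‖truncPow m x y * (starRingEnd ℂ) (walsh b k x) * walsh b l y‖ ≤ 1 := by
  intro x hx y hy
  rw [norm_mul, norm_mul, RCLike.norm_conj, norm_walsh, norm_walsh, mul_one, mul_one]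
  unfold truncPow
  split_ifs with h
  · rw [norm_pow, ← Complex.ofReal_sub, Complex.norm_real, Real.norm_eq_abs]
    refine pow_le_one₀ (abs_nonneg _) ?_
    rw [abs_of_pos (by linarith)]; linarith [hx.1, hy.2]
  · simp

lemma truncPow_self {b : ℕ} (hb : 0 < b) (m ξ : ℕ) (x y : ℝ) :
    truncPow m ((ξ + x) / b) ((ξ + y) / b) = (b : ℂ)⁻¹ ^ m * truncPow m x y := by
  have hb0 : (0 : ℝ) < b := by exact_mod_cast hb
  unfold truncPow
  have : ((ξ : ℝ) + x) / b < (ξ + y) / b ↔ x < y := by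
    rw [div_lt_div_iff_of_pos_right hb0]; constructor <;> intro h <;> linarith
  simp only [this]
  split_ifs
  · rw [← mul_pow]; congr 1; push_cast; ring
  · simp

lemma truncPow_lt {b : ℕ} (hb : 0 < b) (m : ℕ) {ξ η : ℕ} (h : ξ < η) {x y : ℝ}
    (hx : x ∈ Set.Ico (0 : ℝ) 1) (hy : y ∈ Set.Ico (0 : ℝ) 1) :
    truncPow m ((ξ + x) / b) ((η + y) / b)
      = (b : ℂ)⁻¹ ^ m * (((η : ℂ) - ξ) + (y - x)) ^ m := by
  have hb0 : (0 : ℝ) < b := by exact_mod_cast hb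
  have h' : (ξ : ℝ) + 1 ≤ η := by exact_mod_cast h
  unfold truncPow
  rw [if_pos (by rw [div_lt_div_iff_of_pos_right hb0]; linarith [hx.2, hy.1]), ← mul_pow]
  congr 1; push_cast; ring

lemma truncPow_gt {b : ℕ} (hb : 0 < b) (m : ℕ) {ξ η : ℕ} (h : η < ξ) {x y : ℝ}
    (hx : x ∈ Set.Ico (0 : ℝ) 1) (hy : y ∈ Set.Ico (0 : ℝ) 1) :
    truncPow m ((ξ + x) / b) ((η + y) / b) = 0 := by
  have hb0 : (0 : ℝ) < b := by exact_mod_cast hb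
  have h' : (η : ℝ) + 1 ≤ ξ := by exact_mod_cast h
  unfold truncPow
  rw [if_neg (by rw [div_lt_div_iff_of_pos_right hb0]; linarith [hx.1, hy.2])]

/-- Splitting the square by the leading digits `ξ, η` of `x, y`: on the off-diagonal cells the
kernel is zero or a polynomial in `y - x`, and on the diagonal cells it is a rescaled copy of
itself that does not depend on `ξ`. If the lowest digits of `k` and `l` differ, the diagonal
contributions cancel. -/
lemma integral_truncPow_mul_walsh {b : ℕ} (hb : 2 ≤ b) (m n : ℕ) :
    ∀ k l : ℕ, m + 1 < digitDiff b n k l →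
      ∫ x in Set.Ico (0 : ℝ) 1, ∫ y in Set.Ico (0 : ℝ) 1,
        truncPow m x y * (starRingEnd ℂ) (walsh b k x) * walsh b l y = 0 := by
  have hb0 : 0 < b := by omega
  induction n with
  | zero => intro k l h; simp [digitDiff] at h
  | succ n ih =>
    intro k l h
    rw [digitDiff_succ] at h
    rw [integral_square_split hb0 (measurable_truncPow_mul b m k l)
      (norm_truncPow_mul_le b m k l)]
    have hcell : ∀ ξ ∈ Finset.range b, ∀ η ∈ Finset.range b,
        ∫ x in Set.Ico (0 : ℝ) 1, ∫ y in Set.Ico (0 : ℝ) 1,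
          truncPow m ((ξ + x) / b) ((η + y) / b) *
            (starRingEnd ℂ) (walsh b k ((ξ + x) / b)) * walsh b l ((η + y) / b)
        = if η = ξ then (walshRoot b ^ (((l % b : ℕ) : ℤ) - ((k % b : ℕ) : ℤ))) ^ ξ *
            ((b : ℂ)⁻¹ ^ m * ∫ x in Set.Ico (0 : ℝ) 1, ∫ y in Set.Ico (0 : ℝ) 1,
              truncPow m x y * (starRingEnd ℂ) (walsh b (k / b) x) * walsh b (l / b) y)
          else 0 := by
      intro ξ hξ η hη
      rw [Finset.mem_range] at hξ hη
      split_ifs with heq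
      · subst heq
        simp only [← integral_const_mul]
        refine setIntegral_congr_fun measurableSet_Ico fun x hx =>
          setIntegral_congr_fun measurableSet_Ico fun y hy => ?_
        rw [walsh_div hb k hξ hx, walsh_div hb l hξ hy, truncPow_self hb0, map_mul, map_pow,
          map_pow, conj_walshRoot, zpow_sub₀ (walshRoot_ne_zero b), zpow_natCast, zpow_natCast,
          div_eq_mul_inv, mul_pow, inv_pow]
        ring
      · rcases lt_or_gt_of_ne heq with hlt | hgt
        · rw [← integral_zero ℝ ℂ (μ := volume.restrict (Set.Ico (0 : ℝ) 1))]
          refine setIntegral_congr_fun measurableSet_Ico fun x hx => ?_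
          rw [← integral_zero ℝ ℂ (μ := volume.restrict (Set.Ico (0 : ℝ) 1))]
          refine setIntegral_congr_fun measurableSet_Ico fun y hy => ?_
          rw [truncPow_gt hb0 m hlt hx hy, zero_mul, zero_mul]
        · have hz := integral_square_pow_mul_walsh hb (n := n) (k := k / b) (l := l / b)
            (m := m) (by split_ifs at h <;> omega) ((η : ℂ) - ξ)
          rw [← mul_zero ((b : ℂ)⁻¹ ^ m * (starRingEnd ℂ) ((walshRoot b ^ (k % b)) ^ ξ) *
            (walshRoot b ^ (l % b)) ^ η), ← hz]
          simp only [← integral_const_mul]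
          refine setIntegral_congr_fun measurableSet_Ico fun x hx =>
            setIntegral_congr_fun measurableSet_Ico fun y hy => ?_
          rw [walsh_div hb k hξ hx, walsh_div hb l hη hy, truncPow_lt hb0 m hgt hx hy, map_mul]
          ring
    have hrow : ∀ ξ ∈ Finset.range b, _ := fun ξ hξ => by
      have := Finset.sum_congr rfl (hcell ξ hξ)
      rw [Finset.sum_ite_eq' (Finset.range b) ξ, if_pos hξ] at this
      exact congrArg (fun z => (b : ℂ)⁻¹ * z) this
    rw [Finset.sum_congr rfl hrow, ← Finset.mul_sum, ← Finset.sum_mul]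
    by_cases hkl : k % b = l % b
    · rw [ih (k / b) (l / b) (by simpa [hkl] using h)]; simp
    · rw [sum_walshRoot_zpow hb0]
      · simp
      · intro hd
        have hk := Nat.mod_lt k hb0
        have hl := Nat.mod_lt l hb0
        have := Int.eq_zero_of_abs_lt_dvd hd (by rw [abs_lt]; constructor <;> omega)
        omega

/-! ### The periodized Bernoulli polynomial -/

lemma bernoulliPoly_one_add (r : ℕ) (t : ℝ) :
    bernoulliPoly r (1 + t) = bernoulliPoly r t + r * t ^ (r - 1) := by
  have := congrArg (Polynomial.aeval t) (Polynomial.bernoulli_comp_one_add_X r)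
  simpa [bernoulliPoly, Polynomial.aeval_comp] using this

/-- On the unit square the periodization of `B_r` is `B_r(x - y)` plus a truncated power, because
`B_r(1 + t) - B_r(t) = r t ^ (r - 1)`. -/
lemma bernoulliPoly_fract (r : ℕ) {x y : ℝ} (hx : x ∈ Set.Ico (0 : ℝ) 1)
    (hy : y ∈ Set.Ico (0 : ℝ) 1) :
    ((bernoulliPoly r (Int.fract (x - y)) : ℝ) : ℂ)
      = ∑ i ∈ Finset.range (r + 1),
          (((Polynomial.bernoulli r).coeff i : ℂ) * (-1) ^ i) * ((0 : ℂ) + (y - x)) ^ i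
        + (r * (-1) ^ (r - 1)) * truncPow (r - 1) x y := by
  have hpoly : ((bernoulliPoly r (x - y) : ℝ) : ℂ) = ∑ i ∈ Finset.range (r + 1),
      (((Polynomial.bernoulli r).coeff i : ℂ) * (-1) ^ i) * ((0 : ℂ) + (y - x)) ^ i := by
    have hdeg : (Polynomial.bernoulli r).natDegree < r + 1 := by
      rw [Nat.lt_succ_iff, Polynomial.natDegree_le_iff_coeff_eq_zero]
      intro N hN
      rw [Polynomial.coeff_bernoulli, if_neg (by omega)]
    unfold bernoulliPoly
    rw [Polynomial.aeval_eq_sum_range' hdeg]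
    push_cast
    refine Finset.sum_congr rfl fun i _ => ?_
    rw [mul_assoc, ← mul_pow, Rat.smul_def]
    congr 2
    ring
  rw [← hpoly]
  unfold truncPow
  obtain ⟨hx0, hx1⟩ := hx
  obtain ⟨hy0, hy1⟩ := hy
  split_ifs with hlt
  · have : Int.fract (x - y) = 1 + (x - y) := by
      rw [Int.fract_eq_iff]
      exact ⟨by linarith, by linarith, -1, by push_cast; ring⟩
    rw [this, bernoulliPoly_one_add]
    push_cast
    rw [mul_assoc, ← mul_pow]
    congr 3
    ring
  · rw [Int.fract_eq_self.2 ⟨by linarith, by linarith⟩]; simp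

/-- Lemma 6. For a prime `b` and `r ≥ 2`, if `k, l ∈ ℕ₀` satisfy
`κ(k ⊖ l) > r`, then `b̂_{r,per}(k,l) = 0`. -/
theorem bhatPer_sparse (b r : ℕ) (hb : b.Prime) (hr : 2 ≤ r) (k l : ℕ)
    (h : r < hamming b (dsub b k l)) : bhatPer b r k l = 0 := by
  have hb2 := hb.two_le
  have hN : r < digitDiff b (k + l + 1) k l := h.trans_le (hamming_dsub_le hb.pos k l)
  -- `some i` stands for the power `(y - x) ^ i`, `none` for the truncated power.
  let G : Option ℕ → ℝ → ℝ → ℂ := fun o x y =>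
    (o.elim (truncPow (r - 1) x y) fun i => ((0 : ℂ) + (y - x)) ^ i) *
      (starRingEnd ℂ) (walsh b k x) * walsh b l y
  let a : Option ℕ → ℂ := fun o =>
    (r.factorial : ℂ)⁻¹ * o.elim ((r : ℂ) * (-1) ^ (r - 1)) fun i =>
      ((Polynomial.bernoulli r).coeff i : ℂ) * (-1) ^ i
  unfold bhatPer
  refine integral_square_eq_zero (Finset.insertNone (Finset.range (r + 1))) (G := G)
    ?_ ?_ ?_ a ?_
  · rintro (_ | i)
    · exact measurable_truncPow_mul b (r - 1) k l
    · have h1 : Measurable fun p : ℝ × ℝ => ((0 : ℂ) + ((p.2 : ℂ) - p.1)) ^ i := by fun_prop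
      exact (h1.mul (Complex.continuous_conj.measurable.comp
        ((measurable_walsh b k).comp measurable_fst))).mul
        ((measurable_walsh b l).comp measurable_snd)
  · rintro (_ | i) x hx y hy
    · exact norm_truncPow_mul_le b (r - 1) k l x hx y hy
    · simp only [G, Option.elim]
      rw [norm_mul, norm_mul, RCLike.norm_conj, norm_walsh, norm_walsh, mul_one, mul_one,
        norm_pow, zero_add, ← Complex.ofReal_sub, Complex.norm_real, Real.norm_eq_abs]
      refine pow_le_one₀ (abs_nonneg _) ?_
      rw [abs_le]; constructor <;> linarith [hx.1, hx.2, hy.1, hy.2]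
  · rintro (_ | i) hi
    · exact integral_truncPow_mul_walsh hb2 (r - 1) (k + l + 1) k l (by omega)
    · rw [Finset.some_mem_insertNone, Finset.mem_range] at hi
      exact integral_square_pow_mul_walsh hb2 (n := k + l + 1) (by omega) 0
  · intro x hx y hy
    rw [Finset.sum_insertNone, Complex.ofReal_div, bernoulliPoly_fract r hx hy, div_eq_inv_mul,
      mul_add, add_mul, add_mul, Finset.mul_sum, Finset.sum_mul, Finset.sum_mul, add_comm]
    simp only [G, a, Option.elim, Complex.ofReal_natCast]
    congr 1
    · ring
    · exact Finset.sum_congr rfl fun i _ => by ring
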